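/- arXiv:2409.00943 — 2 statements merged into one kernel-verified Lean document; each statement's English description precedes it below -/
import Mathlib

section
/- Let n ≥ 1 and n ≥ m ≥ 0, and let λ = (λ_1, ..., λ_k) be a partition of n+m with λ_k = 1. For any partial order on the vertices of the generalized net GN_{n,m} in which nonadjacent vertices are comparable, every special rim hook GN_{n,m}-tabloid T of shape λ has at least one body vertex (anchor or buoy) appearing in its tail; that is, the tail of T cannot contain only pendants. -/
open scoped Classical

/-! ### Cells and Young diagrams -/

/-- A cell of a Young diagram: `(row, column)`, both 0-indexed, rows from the top. -/
abbrev Cell : Type := ℕ × ℕ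

/-- The length of row `i` (0-indexed from the top) of the Young diagram of the
partition `lam`, whose parts are arranged in weakly decreasing order. -/
def rowLen {N : ℕ} (lam : Nat.Partition N) (i : ℕ) : ℕ :=
  ((lam.parts.sort (· ≤ ·)).reverse).getD i 0

/-- The Young diagram of a partition, as a set of cells. -/
def diag {N : ℕ} (lam : Nat.Partition N) : Set Cell :=
  {c : Cell | c.2 < rowLen lam c.1}

/-- The number of rows (the length) of a partition. -/
def numRows {N : ℕ} (lam : Nat.Partition N) : ℕ := Multiset.card lam.parts

/-! ### Chromatic symmetric functions and Schur functions, as monomial-coefficient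
functions.  A formal power series of bounded degree in the commuting variables
`x_0, x_1, x_2, …` is recorded by the map sending an exponent vector `μ : ℕ → ℕ`
(only finitely many nonzero entries ever matter) to the coefficient of the monomial
`∏ i, x_i ^ μ i`.  Colors / tableau entries are positive integers, so the variable
`x_0` is never used. -/

/-- A proper coloring of `G` by positive integers. -/
def IsProperColoring {V : Type*} (G : SimpleGraph V) (f : V → ℕ) : Prop :=
  (∀ v, 0 < f v) ∧ ∀ u v, G.Adj u v → f u ≠ f v

/-- The coefficient of the monomial `∏ i, x_i ^ μ i` in the chromatic symmetric
function `X_G = ∑_{proper colorings f} ∏_{v} x_{f v}`. -/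
noncomputable def XCoeff {V : Type*} [Fintype V] (G : SimpleGraph V) (μ : ℕ → ℕ) : ℚ :=
  Nat.card {f : V → ℕ //
    IsProperColoring G f ∧ ∀ i, Nat.card {v : V // f v = i} = μ i}

/-- A semistandard Young tableau of shape `lam`: positive entries on the diagram
(normalized to `0` off the diagram), weakly increasing along rows, strictly
increasing down columns. -/
def IsSSYT {N : ℕ} (lam : Nat.Partition N) (t : Cell → ℕ) : Prop :=
  (∀ c, c ∉ diag lam → t c = 0) ∧ (∀ c ∈ diag lam, 0 < t c) ∧
  (∀ i j : ℕ, ((i, j + 1) : Cell) ∈ diag lam → t (i, j) ≤ t (i, j + 1)) ∧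
  (∀ i j : ℕ, ((i + 1, j) : Cell) ∈ diag lam → t (i, j) < t (i + 1, j))

/-- The coefficient of the monomial `∏ i, x_i ^ μ i` in the Schur function `s_lam`,
i.e. the number of SSYT of shape `lam` and weight `μ`. -/
noncomputable def schurFn {N : ℕ} (lam : Nat.Partition N) (μ : ℕ → ℕ) : ℚ :=
  Nat.card {t : Cell → ℕ // IsSSYT lam t ∧
    ∀ i, Nat.card {c : Cell // c ∈ diag lam ∧ t c = i} = μ i}

/-- The coefficient `[s_lam] f` of the Schur function `s_lam` in the (unique, when it
exists) expansion `f = ∑_{ν ⊢ N} c_ν s_ν` of a symmetric function `f`, homogeneous of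
degree `N`, given by its monomial coefficients. -/
noncomputable def sCoeff {N : ℕ} (f : (ℕ → ℕ) → ℚ) (lam : Nat.Partition N) : ℚ :=
  if h : ∃ c : Nat.Partition N →₀ ℚ, ∀ μ, f μ = c.sum fun ν a => a * schurFn ν μ
  then h.choose lam else 0

/-! ### Graphs: generalized nets, generalized spiders, disjoint unions -/

/-- The generalized net `GN_{n,m}`: the complete graph on the body `Fin n`, with a
pendant (`Sum.inr j`) attached to the anchor `Sum.inl j` for each `j : Fin m`. -/
def genNet (n m : ℕ) : SimpleGraph (Fin n ⊕ Fin m) :=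
  SimpleGraph.fromRel fun a b =>
    match a, b with
    | Sum.inl _, Sum.inl _ => True
    | Sum.inl i, Sum.inr j => (i : ℕ) = (j : ℕ)
    | Sum.inr _, _ => False

/-- The generalized spider `GS_{n,(2,1^{m-1})}`: the complete graph on the body
`Fin n`, a pendant `Sum.inr (Sum.inl j)` attached to the body vertex `Sum.inl j` for
each `j : Fin m`, and one extra vertex `Sum.inr (Sum.inr 0)` (the special pendant)
attached to the pendant `Sum.inr (Sum.inl 0)`, so that the body vertex `0` (the
special anchor) carries an attached path on two vertices. -/
def genSpider2 (n m : ℕ) : SimpleGraph (Fin n ⊕ (Fin m ⊕ Fin 1)) :=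
  SimpleGraph.fromRel fun a b =>
    match a, b with
    | Sum.inl _, Sum.inl _ => True
    | Sum.inl i, Sum.inr (Sum.inl j) => (i : ℕ) = (j : ℕ)
    | Sum.inr (Sum.inl j), Sum.inr (Sum.inr _) => (j : ℕ) = 0
    | _, _ => False

/-- Disjoint union of two simple graphs. -/
def disjUnion {α β : Type*} (G : SimpleGraph α) (H : SimpleGraph β) :
    SimpleGraph (α ⊕ β) :=
  SimpleGraph.fromRel fun a b =>
    match a, b with
    | Sum.inl a, Sum.inl b => G.Adj a b
    | Sum.inr a, Sum.inr b => H.Adj a b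
    | _, _ => False

/-- The one-vertex graph `K_1`. -/
def K1 : SimpleGraph (Fin 1) := ⊥

/-- The path (= complete graph) on two vertices `P_2`. -/
def P2 : SimpleGraph (Fin 2) := ⊤

/-! ### Operations on partitions -/

/-- `removeOnes lam t` is the partition `lam ∖ 1^t` obtained by deleting `t` parts
equal to `1` from `lam` (junk value if `lam` has fewer than `t` parts equal to `1`). -/
def removeOnes {N : ℕ} (lam : Nat.Partition N) (t : ℕ) : Nat.Partition (N - t) :=
  if h : Multiset.replicate t 1 ≤ lam.parts then
    { parts := lam.parts - Multiset.replicate t 1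
      parts_pos := fun hx =>
        lam.parts_pos (Multiset.mem_of_le (tsub_le_self) hx)
      parts_sum := by
        have h1 : (lam.parts - Multiset.replicate t 1) + Multiset.replicate t 1
            = lam.parts := tsub_add_cancel_of_le h
        have h2 := congrArg Multiset.sum h1
        rw [Multiset.sum_add, Multiset.sum_replicate, lam.parts_sum] at h2
        simp only [smul_eq_mul, mul_one] at h2
        omega }
  else Nat.Partition.indiscrete (N - t)

/-- The partition `(2^a, 1^b)` of `2*a + b`. -/
def twoOne (a b : ℕ) : Nat.Partition (2 * a + b) where
  parts := Multiset.replicate a 2 + Multiset.replicate b 1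
  parts_pos := by
    intro i hi
    rw [Multiset.mem_add] at hi
    rcases hi with hi | hi <;> · rw [Multiset.eq_of_mem_replicate hi]; omega
  parts_sum := by
    rw [Multiset.sum_add, Multiset.sum_replicate, Multiset.sum_replicate]
    simp only [smul_eq_mul, mul_one]
    omega

/-! ### Special rim hook `G`-tabloids -/

/-- Two cells are adjacent if they share an edge. -/
def cellAdj (c d : Cell) : Prop :=
  (c.1 = d.1 ∧ (c.2 + 1 = d.2 ∨ d.2 + 1 = c.2)) ∨
  (c.2 = d.2 ∧ (c.1 + 1 = d.1 ∨ d.1 + 1 = c.1))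

/-- A set of cells is (the diagram of) a Young diagram if it is closed under
decreasing either coordinate. -/
def IsYoungDiag (D : Set Cell) : Prop :=
  ∀ i j i' j' : ℕ, ((i, j) : Cell) ∈ D → i' ≤ i → j' ≤ j → ((i', j') : Cell) ∈ D

/-- A set of cells is connected (via edge-adjacency, within the set). -/
def CellConnected (S : Set Cell) : Prop :=
  ∀ c ∈ S, ∀ d ∈ S, Relation.ReflTransGen (fun a b => a ∈ S ∧ b ∈ S ∧ cellAdj a b) c d

/-- A border strip (= rim hook, as a set of cells): nonempty, connected, and
containing no 2×2 square of cells. -/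
def IsBorderStrip (H : Set Cell) : Prop :=
  H.Nonempty ∧ CellConnected H ∧
    ∀ i j : ℕ, ¬(((i, j) : Cell) ∈ H ∧ ((i + 1, j) : Cell) ∈ H ∧
      ((i, j + 1) : Cell) ∈ H ∧ ((i + 1, j + 1) : Cell) ∈ H)

/-- `H` is a rim hook of the Young diagram `D`: a border strip contained in `D`
whose removal leaves a Young diagram. -/
def IsRimHookOf (D H : Set Cell) : Prop :=
  H ⊆ D ∧ IsBorderStrip H ∧ IsYoungDiag (D \ H)

/-- `IsRemovalSeq L D` says that the sets of cells in the list `L` may be removed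
successively from the diagram `D`, each being a rim hook of what remains, with
nothing left at the end. -/
def IsRemovalSeq : List (Set Cell) → Set Cell → Prop
  | [], D => D = ∅
  | H :: L, D => IsRimHookOf D H ∧ IsRemovalSeq L (D \ H)

/-- A special rim hook `G`-tabloid of shape `lam`, with respect to an order `r` on
the vertices of `G`: the cells of the diagram of `lam` are filled bijectively with
the vertices of `G` (vertex `v` goes in cell `pos v`), and the diagram is tiled by
rim hooks, successively removable, each meeting the first column.  The rim hooks are
recorded by the labelling `hk`, which assigns to each vertex the topmost row in which
its rim hook meets the first column.  The vertices in each rim hook form a stable set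
of `G` and, read from the rim hook's (bottom) cell in the first column — i.e. in
increasing order of the diagonal index `column − row` — they increase with respect
to `r`. -/
structure SRHGTabloid {V : Type*} (G : SimpleGraph V) (r : V → V → Prop)
    {N : ℕ} (lam : Nat.Partition N) where
  /-- the cell occupied by each vertex -/
  pos : V → Cell
  /-- the label of the rim hook containing each vertex: the topmost row in which
  that rim hook meets the first column -/
  hk : V → ℕ
  pos_inj : Function.Injective pos
  pos_range : Set.range pos = diag lam
  hk_mem : ∀ v, ((hk v, 0) : Cell) ∈ pos '' {u | hk u = hk v}
  hk_min : ∀ v i, ((i, 0) : Cell) ∈ pos '' {u | hk u = hk v} → hk v ≤ i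
  removal : ∃ L : List ℕ, L.Nodup ∧ (∀ i, i ∈ L ↔ ∃ v, hk v = i) ∧
    IsRemovalSeq (L.map fun i => pos '' {u | hk u = i}) (diag lam)
  stable : ∀ u v, hk u = hk v → u ≠ v → ¬G.Adj u v
  increasing : ∀ u v, hk u = hk v →
    ((pos u).2 : ℤ) - ((pos u).1 : ℤ) < ((pos v).2 : ℤ) - ((pos v).1 : ℤ) → r u v

/-- The sign of a special rim hook `G`-tabloid: `(-1)` to the total number of north
steps, where a rim hook spanning `k` rows contributes `k - 1` north steps. -/
noncomputable def tabSign {V : Type*} {G : SimpleGraph V} {r : V → V → Prop}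
    {N : ℕ} {lam : Nat.Partition N} (T : SRHGTabloid G r lam) : ℤ :=
  (-1) ^ ∑ i ∈ Finset.range N,
    ({a : ℕ | ∃ v, T.hk v = i ∧ (T.pos v).1 = a}.ncard - 1)

/-- The cells of the head of a tabloid of shape `lam`: the rows of length `≥ 2`. -/
def headCells {N : ℕ} (lam : Nat.Partition N) : Set Cell :=
  {c : Cell | c ∈ diag lam ∧ 2 ≤ rowLen lam c.1}

/-- The cells of the tail of a tabloid of shape `lam`: the rows of length `1`. -/
def tailCells {N : ℕ} (lam : Nat.Partition N) : Set Cell :=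
  {c : Cell | c ∈ diag lam ∧ rowLen lam c.1 = 1}

/-- Two special rim hook `G`-tabloids have the same head: the same cells of the head
are occupied by the same vertices, and the rim hook structure restricted to the head
agrees. -/
def SameHead {V : Type*} {G : SimpleGraph V} {r : V → V → Prop} {N : ℕ}
    {lam : Nat.Partition N} (T T' : SRHGTabloid G r lam) : Prop :=
  (∀ v, T.pos v ∈ headCells lam ↔ T'.pos v ∈ headCells lam) ∧
  (∀ v, T.pos v ∈ headCells lam → T.pos v = T'.pos v) ∧
  (∀ u v, T.pos u ∈ headCells lam → T.pos v ∈ headCells lam →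
    (T.hk u = T.hk v ↔ T'.hk u = T'.hk v))

/-!
Vertices of a clique lie in distinct rim hooks. A rim hook containing a cell of the head has its
topmost first-column cell in a row of length at least `2`: either that row is weakly above the
cell, or the hook enters that row from above in some column, which is not the first one by the
choice of the topmost cell. Hence if the `k` vertices of a clique all lie in the head, the shape
has `k` rows of length at least `2`; together with a row of length `1` this gives more than `2 * k`
cells. In `GN_{n,m}` the body is a clique of `n` vertices and there are `n + m ≤ 2 * n` cells.
-/

theorem sum_getD_le_list_sum {M : Type*} [AddCommMonoid M] [PartialOrder M]
    [CanonicallyOrderedAdd M] (l : List M) (S : Finset ℕ) :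
    ∑ i ∈ S, l.getD i 0 ≤ l.sum := by
  have eq_zero_outside : ∀ i ∉ Finset.range l.length, l.getD i 0 = 0 := fun i hi =>
    List.getD_eq_default _ _ (not_lt.1 (mt Finset.mem_range.2 hi))
  calc ∑ i ∈ S, l.getD i 0
      ≤ ∑ i ∈ S ∪ Finset.range l.length, l.getD i 0 :=
        Finset.sum_le_sum_of_subset Finset.subset_union_left
    _ = ∑ i ∈ Finset.range l.length, l.getD i 0 :=
        (Finset.sum_subset Finset.subset_union_right fun i _ => eq_zero_outside i).symm
    _ = l.sum := by
        simp only [Finset.sum_range, List.getD_eq_get, List.get_eq_getElem,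
          Fin.sum_univ_getElem]

section RowLengths

variable {N : ℕ} (lam : Nat.Partition N)

theorem rowLen_antitone : Antitone (rowLen lam) := by
  intro i j hij
  have sorted : (lam.parts.sort (· ≤ ·)).reverse.SortedGE :=
    (List.pairwise_reverse.2 (Multiset.pairwise_sort _ _)).sortedGE
  unfold rowLen
  rcases lt_or_ge j (lam.parts.sort (· ≤ ·)).reverse.length with hj | hj
  · rw [List.getD_eq_getElem _ _ hj, List.getD_eq_getElem _ _ (hij.trans_lt hj)]
    exact sorted.getElem_ge_getElem_of_le hij
  · rw [List.getD_eq_default _ _ hj]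
    exact Nat.zero_le _

theorem sum_rowLen_le (S : Finset ℕ) : ∑ i ∈ S, rowLen lam i ≤ N :=
  calc ∑ i ∈ S, rowLen lam i
      ≤ (lam.parts.sort (· ≤ ·)).reverse.sum := sum_getD_le_list_sum _ S
    _ = lam.parts.sum := by
        rw [List.sum_reverse, ← Multiset.sum_coe, Multiset.sort_eq]
    _ = N := lam.parts_sum

variable {lam}

theorem exists_rowLen_eq_of_mem_parts {a : ℕ} (ha : a ∈ lam.parts) :
    ∃ i, rowLen lam i = a := by
  have mem_sorted : a ∈ (lam.parts.sort (· ≤ ·)).reverse := by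
    rwa [List.mem_reverse, Multiset.mem_sort]
  obtain ⟨i, hi, rfl⟩ := List.mem_iff_getElem.1 mem_sorted
  exact ⟨i, List.getD_eq_getElem _ _ hi⟩

theorem two_mul_card_lt_of_two_le_rowLen (hone : 1 ∈ lam.parts) {S : Finset ℕ}
    (hS : ∀ i ∈ S, 2 ≤ rowLen lam i) : 2 * S.card < N := by
  obtain ⟨t, ht⟩ := exists_rowLen_eq_of_mem_parts hone
  have t_notMem : t ∉ S := fun h => by have := hS t h; omega
  calc 2 * S.card
      = S.card • 2 := by rw [smul_eq_mul, mul_comm]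
    _ ≤ ∑ i ∈ S, rowLen lam i := Finset.card_nsmul_le_sum S _ 2 hS
    _ < rowLen lam t + ∑ i ∈ S, rowLen lam i := by omega
    _ = ∑ i ∈ insert t S, rowLen lam i := (Finset.sum_insert t_notMem).symm
    _ ≤ N := sum_rowLen_le lam _

end RowLengths

theorem CellConnected.exists_vertical_step {S : Set Cell} (hS : CellConnected S) {c d : Cell}
    (hc : c ∈ S) (hd : d ∈ S) {i : ℕ} (hci : c.1 ≤ i) (hid : i < d.1) :
    ∃ j, ((i, j) : Cell) ∈ S ∧ ((i + 1, j) : Cell) ∈ S := by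
  by_contra! no_step
  have stays_above : ∀ e, Relation.ReflTransGen
      (fun a b => a ∈ S ∧ b ∈ S ∧ cellAdj a b) c e → e.1 ≤ i := by
    intro e path
    induction path with
    | refl => exact hci
    | @tail a b _ step ih =>
      obtain ⟨ha, hb, hadj⟩ := step
      by_contra! hib
      have a_eq : a = (i, b.2) := by
        unfold cellAdj at hadj
        exact Prod.ext (by omega) (by omega)
      have b_eq : b = (i + 1, b.2) := by
        unfold cellAdj at hadj
        exact Prod.ext (by omega) rfl
      exact no_step b.2 (a_eq ▸ ha) (b_eq ▸ hb)
  exact (stays_above d (hS c hc d hd)).not_gt hid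

theorem IsRemovalSeq.isBorderStrip_of_mem {L : List (Set Cell)} {D H : Set Cell}
    (hL : IsRemovalSeq L D) (hH : H ∈ L) : IsBorderStrip H := by
  induction L generalizing D with
  | nil => exact absurd hH List.not_mem_nil
  | cons A L ih =>
    rcases List.mem_cons.1 hH with rfl | hH
    · exact hL.1.2.1
    · exact ih hL.2 hH

namespace SRHGTabloid

variable {V : Type*} {G : SimpleGraph V} {r : V → V → Prop} {N : ℕ} {lam : Nat.Partition N}
  (T : SRHGTabloid G r lam)

/-- The set of cells of the rim hook of `T` with label `i`, that is, the one whose topmost cell in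
the first column lies in row `i`; it is empty if there is no such rim hook. -/
def rimHook (i : ℕ) : Set Cell := T.pos '' {u | T.hk u = i}

theorem rimHook_subset_diag (i : ℕ) : T.rimHook i ⊆ diag lam :=
  T.pos_range ▸ Set.image_subset_range _ _

theorem isBorderStrip_rimHook (v : V) : IsBorderStrip (T.rimHook (T.hk v)) := by
  obtain ⟨L, -, mem_L, hL⟩ := T.removal
  exact hL.isBorderStrip_of_mem (List.mem_map_of_mem ((mem_L _).2 ⟨v, rfl⟩))

theorem pos_mem_rimHook (v : V) : T.pos v ∈ T.rimHook (T.hk v) := ⟨v, rfl, rfl⟩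

theorem two_le_rowLen_hk {v : V} (hv : 2 ≤ rowLen lam (T.pos v).1) :
    2 ≤ rowLen lam (T.hk v) := by
  rcases le_or_gt (T.hk v) (T.pos v).1 with hle | hlt
  · exact hv.trans (rowLen_antitone lam hle)
  · obtain ⟨i, hi⟩ := Nat.exists_eq_add_one_of_ne_zero (Nat.ne_zero_of_lt hlt)
    obtain ⟨j, above, below⟩ := (T.isBorderStrip_rimHook v).2.1.exists_vertical_step
      (T.pos_mem_rimHook v) (T.hk_mem v) (i := i) (by omega) (by dsimp only; omega)
    have j_ne_zero : j ≠ 0 := by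
      rintro rfl
      have := T.hk_min v i above
      omega
    have j_lt : j < rowLen lam (i + 1) := T.rimHook_subset_diag _ below
    rw [hi]
    omega

theorem hk_injOn_of_isClique {K : Set V} (hK : G.IsClique K) : Set.InjOn T.hk K := by
  intro u hu v hv huv
  by_contra hne
  exact T.stable u v huv hne (hK hu hv hne)

end SRHGTabloid

theorem genNet_isClique_range_inl (n m : ℕ) : (genNet n m).IsClique (Set.range Sum.inl) := by
  rintro _ ⟨u, rfl⟩ _ ⟨v, rfl⟩ hne
  exact (SimpleGraph.fromRel_adj _ _ _).2 ⟨hne, Or.inl trivial⟩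

theorem tail_not_only_pendants_genNet_general {V : Type*} {G : SimpleGraph V}
    {r : V → V → Prop} {N : ℕ} {lam : Nat.Partition N} (hlast : 1 ∈ lam.parts)
    (T : SRHGTabloid G r lam) {K : Finset V} (hK : G.IsClique (K : Set V))
    (hcard : N ≤ 2 * K.card) :
    ∃ v ∈ K, rowLen lam (T.pos v).1 = 1 := by
  by_contra! not_tail
  have hook_rows : ∀ i ∈ K.image T.hk, 2 ≤ rowLen lam i := by
    refine Finset.forall_mem_image.2 fun v hv => T.two_le_rowLen_hk ?_
    have cell_mem : (T.pos v).2 < rowLen lam (T.pos v).1 :=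
      T.rimHook_subset_diag _ (T.pos_mem_rimHook v)
    have := not_tail v hv
    omega
  have card_rows : (K.image T.hk).card = K.card :=
    Finset.card_image_of_injOn (T.hk_injOn_of_isClique hK)
  have := two_mul_card_lt_of_two_le_rowLen hlast hook_rows
  omega

/-- For `n ≥ 1`, `n ≥ m ≥ 0`, and a partition `lam` of `n + m`
whose smallest part is `1`, for any partial order on the vertices of the generalized
net `GN_{n,m}` in which nonadjacent vertices are comparable, every special rim hook
`GN_{n,m}`-tabloid of shape `lam` has at least one body vertex in its tail (the rows
of length `1`); the tail cannot contain only pendants. -/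
theorem tail_not_only_pendants_genNet (n m : ℕ) (hn : 1 ≤ n) (hm : m ≤ n)
    (lam : Nat.Partition (n + m)) (hlast : 1 ∈ lam.parts)
    (po : PartialOrder (Fin n ⊕ Fin m))
    (hcomp : ∀ u v, ¬(genNet n m).Adj u v → po.le u v ∨ po.le v u)
    (T : SRHGTabloid (genNet n m) po.le lam) :
    ∃ v : Fin n, rowLen lam (T.pos (Sum.inl v)).1 = 1 := by
  simpa using tail_not_only_pendants_genNet_general hlast T (K := Finset.univ.map .inl)
    (by simpa using genNet_isClique_range_inl n m)
    (by rw [Finset.card_map, Finset.card_fin]; omega)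
end

section
/- Let n ≥ 1 and n ≥ m ≥ 0, and let λ = (λ_1, ..., λ_k) be a partition of n+m whose smallest part λ_k is at least 2. If the coefficient [s_λ]X_{GN_{n,m}} is nonzero, then n = m and λ = (2^n) (the partition with n parts all equal to 2). -/
open scoped Classical

/-!
Order the partitions of `N` by the entry sum of the superstandard tableau, whose `i`-th row is
constantly `i`. A tableau of shape `κ` lies above the superstandard one, so if its weight is `ν`
then `κ` has at most as many rows and at most the entry sum of `ν`, with equal sums only for
`κ = ν`. Hence, if `s_λ` occurs in `f`, then for `ν` of least entry sum among the shapes that occur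
and have at most as many rows as `λ`, the monomial `x^ν` has a nonzero coefficient in `f`. For
`f = X_G` this gives a proper coloring of `G` with at most `ℓ(λ)` colors. As `GN_{n,m}` contains
`K_n`, the partition `λ` of `n + m ≤ 2 n` has at least `n` parts; if all of them are at least `2`,
they are `n` twos.
-/

theorem eq_replicate_of_sum_le_card_nsmul {α : Type*} [AddCommMonoid α] [PartialOrder α]
    [IsOrderedCancelAddMonoid α] {s : Multiset α} {a : α} (ha : ∀ x ∈ s, a ≤ x)
    (hs : s.sum ≤ s.card • a) : s = Multiset.replicate s.card a := by
  refine Multiset.eq_replicate_card.2 fun x hx => ?_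
  by_contra hne
  have hlt := Multiset.sum_lt_sum (f := fun _ => a) (g := id) ha
    ⟨x, hx, (ha x hx).lt_of_ne' hne⟩
  rw [Multiset.map_const', Multiset.sum_replicate, Multiset.map_id] at hlt
  exact hlt.not_ge hs

section Diagram

variable {N : ℕ} {lam : Nat.Partition N}

/-- The diagram `diag lam` as an object of Mathlib's type of Young diagrams, which makes its cells a
`Finset` and gives access to row and column lengths. -/
noncomputable def youngDiagram (lam : Nat.Partition N) : YoungDiagram :=
  .ofRowLens (lam.parts.sort (· ≤ ·)).reverse (lam.parts.pairwise_sort _).sortedLE.reverse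

theorem mem_youngDiagram {c : Cell} : c ∈ youngDiagram lam ↔ c ∈ diag lam := by
  rw [youngDiagram, YoungDiagram.mem_ofRowLens, diag, Set.mem_ofPred_eq, rowLen]
  by_cases hc : c.1 < (lam.parts.sort (· ≤ ·)).reverse.length
  · rw [List.getD_eq_getElem _ _ hc, exists_prop_of_true hc]
  · rw [List.getD_eq_default _ _ (not_lt.1 hc)]
    simp only [hc, IsEmpty.exists_iff, not_lt_zero]

theorem coe_rowLens_youngDiagram (lam : Nat.Partition N) :
    ((youngDiagram lam).rowLens : Multiset ℕ) = lam.parts := by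
  rw [youngDiagram, YoungDiagram.rowLens_ofRowLens_eq_self, Multiset.coe_reverse, Multiset.sort_eq]
  exact fun x hx => lam.parts_pos (by simpa using hx)

theorem youngDiagram_injective : Function.Injective (youngDiagram (N := N)) := fun κ ν h =>
  Nat.Partition.ext (by rw [← coe_rowLens_youngDiagram, h, coe_rowLens_youngDiagram])

theorem isYoungDiag_diag (lam : Nat.Partition N) : IsYoungDiag (diag lam) :=
  fun _ _ _ _ h hi hj => mem_youngDiagram.1 ((youngDiagram lam).up_left_mem hi hj
    (mem_youngDiagram.2 h))

theorem mk_zero_mem_diag_iff {i : ℕ} : ((i, 0) : Cell) ∈ diag lam ↔ i < numRows lam := by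
  rw [← mem_youngDiagram, YoungDiagram.mem_iff_lt_colLen, ← YoungDiagram.length_rowLens,
    ← Multiset.coe_card, coe_rowLens_youngDiagram, numRows]

theorem fst_lt_numRows_of_mem_diag {c : Cell} (hc : c ∈ diag lam) : c.1 < numRows lam :=
  mk_zero_mem_diag_iff.1 (isYoungDiag_diag lam _ _ c.1 0 hc le_rfl c.2.zero_le)

end Diagram

section Weight

variable {N M : ℕ} {lam : Nat.Partition N} {ν : Nat.Partition M} {s t : Cell → ℕ} {μ : ℕ → ℕ}

/-- The filling `t` of the diagram of `lam` has weight `μ`: every `i` occurs `μ i` times. This is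
the condition on tableaux in the definition of `schurFn`. -/
def HasWeight (lam : Nat.Partition N) (t : Cell → ℕ) (μ : ℕ → ℕ) : Prop :=
  ∀ i, Nat.card {c : Cell // c ∈ diag lam ∧ t c = i} = μ i

theorem hasWeight_iff_count :
    HasWeight lam t μ ↔ ∀ i, ((youngDiagram lam).cells.val.map t).count i = μ i := by
  refine forall_congr' fun i => ?_
  rw [Multiset.count_map, ← Finset.filter_val, Finset.card_val, ← Nat.card_eq_finsetCard]
  simp only [Finset.mem_filter, YoungDiagram.mem_cells, mem_youngDiagram, eq_comm]

theorem HasWeight.unique {μ' : ℕ → ℕ} (h : HasWeight lam t μ) (h' : HasWeight lam t μ') : μ = μ' :=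
  funext fun i => (h i).symm.trans (h' i)

theorem HasWeight.map_eq (ht : HasWeight lam t μ) (hs : HasWeight ν s μ) :
    (youngDiagram lam).cells.val.map t = (youngDiagram ν).cells.val.map s :=
  Multiset.ext.2 fun i => (hasWeight_iff_count.1 ht i).trans (hasWeight_iff_count.1 hs i).symm

theorem HasWeight.exists_apply_eq (ht : HasWeight lam t μ) (hs : HasWeight ν s μ) {c : Cell}
    (hc : c ∈ diag lam) : ∃ d ∈ diag ν, s d = t c := by
  have hmem : t c ∈ (youngDiagram lam).cells.val.map t :=
    Multiset.mem_map_of_mem t (mem_youngDiagram.2 hc)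
  rw [ht.map_eq hs, Multiset.mem_map] at hmem
  exact hmem.imp fun d hd => ⟨mem_youngDiagram.1 hd.1, hd.2⟩

/-- The sum of the entries of the filling `t` of the diagram of `lam`. -/
noncomputable def entrySum (lam : Nat.Partition N) (t : Cell → ℕ) : ℕ :=
  ∑ c ∈ (youngDiagram lam).cells, t c

theorem HasWeight.entrySum_eq (ht : HasWeight lam t μ) (hs : HasWeight ν s μ) :
    entrySum lam t = entrySum ν s :=
  congrArg Multiset.sum (ht.map_eq hs)

theorem finite_isSSYT_hasWeight (lam : Nat.Partition N) (μ : ℕ → ℕ) :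
    {t | IsSSYT lam t ∧ HasWeight lam t μ}.Finite := by
  rcases Set.eq_empty_or_nonempty {t | IsSSYT lam t ∧ HasWeight lam t μ} with h | ⟨s, -, hs⟩
  · exact h ▸ Set.finite_empty
  let restrict (t : Cell → ℕ) (c : (youngDiagram lam).cells) : ℕ := t c
  have hmaps : Set.MapsTo restrict {t | IsSSYT lam t ∧ HasWeight lam t μ}
      (Set.univ.pi fun _ => s '' (youngDiagram lam).cells) := fun t ht c _ =>
    (ht.2.exists_apply_eq hs (mem_youngDiagram.1 c.2)).imp fun d hd =>
      ⟨mem_youngDiagram.2 hd.1, hd.2⟩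
  have hinj : Set.InjOn restrict {t | IsSSYT lam t ∧ HasWeight lam t μ} := by
    intro t ht t' ht' h
    funext c
    by_cases hc : c ∈ diag lam
    · exact congrFun h ⟨c, mem_youngDiagram.2 hc⟩
    · rw [ht.1.1 c hc, ht'.1.1 c hc]
  exact Set.Finite.of_injOn hmaps hinj
    (Set.Finite.pi fun _ => (Finset.finite_toSet _).image s)

theorem schurFn_ne_zero_iff : schurFn lam μ ≠ 0 ↔ ∃ t, IsSSYT lam t ∧ HasWeight lam t μ := by
  have : Finite {t // IsSSYT lam t ∧ HasWeight lam t μ} := finite_isSSYT_hasWeight lam μ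
  rw [← nonempty_subtype, ← Finite.card_pos_iff, Nat.pos_iff_ne_zero]
  exact Nat.cast_ne_zero

end Weight

section Superstandard

variable {N : ℕ} {lam : Nat.Partition N} {t : Cell → ℕ}

/-- The superstandard tableau of shape `lam`: the entries of row `i` (0-indexed) are all `i + 1`. -/
noncomputable def superstandard (lam : Nat.Partition N) (c : Cell) : ℕ :=
  if c ∈ diag lam then c.1 + 1 else 0

/-- The partition `lam` as an exponent vector of `x_1, x_2, …`; the exponent of the unused variable
`x_0` is `0`. -/
noncomputable def rowWeight (lam : Nat.Partition N) : ℕ → ℕ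
  | 0 => 0
  | i + 1 => (youngDiagram lam).rowLen i

theorem rowWeight_injective : Function.Injective (rowWeight (N := N)) := fun κ ν h =>
  youngDiagram_injective <| YoungDiagram.ext <| Finset.ext fun ⟨i, j⟩ => by
    have hrow : (youngDiagram κ).rowLen i = (youngDiagram ν).rowLen i := congrFun h (i + 1)
    simp only [YoungDiagram.mem_cells, YoungDiagram.mem_iff_lt_rowLen, hrow]

theorem rowWeight_eq_zero_of_notMem_Icc {i : ℕ} (hi : i ∉ Finset.Icc 1 (numRows lam)) :
    rowWeight lam i = 0 := by
  cases i with
  | zero => rfl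
  | succ i =>
    by_contra h
    have hc : ((i, 0) : Cell) ∈ youngDiagram lam :=
      YoungDiagram.mem_iff_lt_rowLen.2 (Nat.pos_of_ne_zero h)
    exact hi (Finset.mem_Icc.2 ⟨i.succ_pos, fst_lt_numRows_of_mem_diag (mem_youngDiagram.1 hc)⟩)

theorem isSSYT_superstandard (lam : Nat.Partition N) : IsSSYT lam (superstandard lam) := by
  refine ⟨fun c hc => if_neg hc, fun c hc => ?_, fun i j h => ?_, fun i j h => ?_⟩
  · simp [superstandard, hc]
  · simp [superstandard, h, isYoungDiag_diag lam _ _ i j h le_rfl j.le_succ]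
  · simp [superstandard, h, isYoungDiag_diag lam _ _ i j h i.le_succ le_rfl]

theorem hasWeight_superstandard (lam : Nat.Partition N) :
    HasWeight lam (superstandard lam) (rowWeight lam) := by
  have hmap : (youngDiagram lam).cells.val.map (superstandard lam) =
      (youngDiagram lam).cells.val.map fun c => c.1 + 1 :=
    Multiset.map_congr rfl fun c hc => if_pos (mem_youngDiagram.1 hc)
  refine hasWeight_iff_count.2 fun i => ?_
  rw [hmap, Multiset.count_map, ← Finset.filter_val, Finset.card_val]
  cases i with
  | zero => simp [rowWeight]
  | succ i => simp [rowWeight, YoungDiagram.rowLen_eq_card, YoungDiagram.row, eq_comm]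

theorem schurFn_rowWeight_self_ne_zero (lam : Nat.Partition N) : schurFn lam (rowWeight lam) ≠ 0 :=
  schurFn_ne_zero_iff.2 ⟨_, isSSYT_superstandard lam, hasWeight_superstandard lam⟩

theorem IsSSYT.succ_le_apply (ht : IsSSYT lam t) :
    ∀ {i j : ℕ}, ((i, j) : Cell) ∈ diag lam → i + 1 ≤ t (i, j)
  | 0, _, h => ht.2.1 _ h
  | i + 1, j, h =>
    (ht.succ_le_apply (isYoungDiag_diag lam _ _ i j h i.le_succ le_rfl)).trans_lt (ht.2.2.2 i j h)

theorem IsSSYT.superstandard_le (ht : IsSSYT lam t) : superstandard lam ≤ t := fun c => by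
  by_cases hc : c ∈ diag lam
  · simpa [superstandard, hc] using ht.succ_le_apply hc
  · simp [superstandard, hc]

theorem IsSSYT.eq_superstandard_of_entrySum_le (ht : IsSSYT lam t)
    (h : entrySum lam t ≤ entrySum lam (superstandard lam)) : t = superstandard lam := by
  have hle : ∀ c ∈ (youngDiagram lam).cells, superstandard lam c ≤ t c :=
    fun c _ => ht.superstandard_le c
  have heq := (Finset.sum_eq_sum_iff_of_le hle).1 ((Finset.sum_le_sum hle).antisymm h)
  funext c
  by_cases hc : c ∈ diag lam
  · exact (heq c (mem_youngDiagram.2 hc)).symm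
  · rw [ht.1 c hc, superstandard, if_neg hc]

end Superstandard

section Kostka

variable {N M : ℕ} {κ : Nat.Partition N} {ν : Nat.Partition M}

theorem numRows_le_of_schurFn_rowWeight_ne_zero (h : schurFn κ (rowWeight ν) ≠ 0) :
    numRows κ ≤ numRows ν := by
  obtain ⟨t, ht, hw⟩ := schurFn_ne_zero_iff.1 h
  refine le_of_forall_lt fun i hi => ?_
  have hc := mk_zero_mem_diag_iff.2 hi
  obtain ⟨d, hd, hdt⟩ := hw.exists_apply_eq (hasWeight_superstandard ν) hc
  rw [superstandard, if_pos hd] at hdt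
  have hrow := ht.succ_le_apply hc
  have := fst_lt_numRows_of_mem_diag hd
  omega

theorem eq_of_schurFn_rowWeight_ne_zero_of_entrySum_le {ν : Nat.Partition N}
    (h : schurFn κ (rowWeight ν) ≠ 0)
    (hsum : entrySum ν (superstandard ν) ≤ entrySum κ (superstandard κ)) : κ = ν := by
  obtain ⟨t, ht, hw⟩ := schurFn_ne_zero_iff.1 h
  have hle := hw.entrySum_eq (hasWeight_superstandard ν) ▸ hsum
  obtain rfl := ht.eq_superstandard_of_entrySum_le hle
  exact rowWeight_injective ((hasWeight_superstandard κ).unique hw)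

end Kostka

section SchurCoefficient

variable {N : ℕ} {lam : Nat.Partition N} {f : (ℕ → ℕ) → ℚ}

theorem exists_schur_expansion_of_sCoeff_ne_zero (h : sCoeff f lam ≠ 0) :
    ∃ a : Nat.Partition N →₀ ℚ, (∀ μ, f μ = a.sum fun ν x => x * schurFn ν μ) ∧ a lam ≠ 0 := by
  unfold sCoeff at h
  split_ifs at h with hex
  · exact ⟨hex.choose, hex.choose_spec, h⟩
  · exact absurd rfl h

theorem exists_rowWeight_ne_zero_of_sCoeff_ne_zero (h : sCoeff f lam ≠ 0) :
    ∃ ν : Nat.Partition N, numRows ν ≤ numRows lam ∧ f (rowWeight ν) ≠ 0 := by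
  obtain ⟨a, ha, hlam⟩ := exists_schur_expansion_of_sCoeff_ne_zero h
  obtain ⟨ν, hν, hmin⟩ := Finset.exists_min_image {ν ∈ a.support | numRows ν ≤ numRows lam}
    (fun ν => entrySum ν (superstandard ν)) ⟨lam, by simp [hlam]⟩
  obtain ⟨hνa, hνrows⟩ := Finset.mem_filter.1 hν
  refine ⟨ν, hνrows, ?_⟩
  have hother : ∀ κ ∈ a.support, κ ≠ ν → a κ * schurFn κ (rowWeight ν) = 0 := by
    intro κ hκ hne
    by_contra h0
    have hK := right_ne_zero_of_mul h0
    have hκrows := (numRows_le_of_schurFn_rowWeight_ne_zero hK).trans hνrows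
    exact hne (eq_of_schurFn_rowWeight_ne_zero_of_entrySum_le hK
      (hmin κ (Finset.mem_filter.2 ⟨hκ, hκrows⟩)))
  rw [ha, Finsupp.sum, Finset.sum_eq_single_of_mem ν hνa hother]
  exact mul_ne_zero (Finsupp.mem_support_iff.1 hνa) (schurFn_rowWeight_self_ne_zero ν)

end SchurCoefficient

section Coloring

variable {V : Type*} [Fintype V] {G : SimpleGraph V}

theorem colorable_card_of_XCoeff_ne_zero {μ : ℕ → ℕ} {s : Finset ℕ} (hμ : ∀ i ∉ s, μ i = 0)
    (h : XCoeff G μ ≠ 0) : G.Colorable s.card := by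
  obtain ⟨f, ⟨-, hadj⟩, hf⟩ := (Nat.card_ne_zero.1 (Nat.cast_ne_zero.1 h)).1
  have hmem : ∀ v, f v ∈ s := fun v => by
    by_contra hv
    have : Nonempty {u : V // f u = f v} := ⟨v, rfl⟩
    exact Nat.card_pos.ne' ((hf (f v)).trans (hμ _ hv))
  let C : G.Coloring s := .mk (fun v => ⟨f v, hmem v⟩) fun huv h =>
    hadj _ _ huv (Subtype.ext_iff.1 h)
  simpa using C.colorable

theorem colorable_numRows_of_sCoeff_XCoeff_ne_zero {N : ℕ} {lam : Nat.Partition N}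
    (h : sCoeff (XCoeff G) lam ≠ 0) : G.Colorable (numRows lam) := by
  obtain ⟨ν, hν, hX⟩ := exists_rowWeight_ne_zero_of_sCoeff_ne_zero h
  have hcol := colorable_card_of_XCoeff_ne_zero (fun _ => rowWeight_eq_zero_of_notMem_Icc) hX
  rw [Nat.card_Icc, Nat.add_sub_cancel] at hcol
  exact hcol.mono hν

theorem le_of_colorable_genNet {n m k : ℕ} (h : (genNet n m).Colorable k) : n ≤ k := by
  simpa using h.card_le_of_pairwise_adj Sum.inl fun i j hij => by
    simp [genNet, SimpleGraph.fromRel_adj, hij]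

end Coloring

/-- For `n ≥ 1`, `n ≥ m ≥ 0`, and a partition `lam` of `n + m` all
of whose parts are at least `2`: if `[s_lam] X_{GN_{n,m}} ≠ 0` then `n = m` and
`lam = (2^n)`. -/
theorem schurCoeff_genNet_ne_zero_of_no_ones (n m : ℕ) (hn : 1 ≤ n) (hm : m ≤ n)
    (lam : Nat.Partition (n + m)) (hmin : 1 ∉ lam.parts)
    (hne : sCoeff (XCoeff (genNet n m)) lam ≠ 0) :
    n = m ∧ lam.parts = Multiset.replicate n 2 := by
  have hrows : n ≤ lam.parts.card :=
    le_of_colorable_genNet (colorable_numRows_of_sCoeff_XCoeff_ne_zero hne)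
  have htwo : ∀ p ∈ lam.parts, 2 ≤ p := fun p hp =>
    Nat.lt_of_le_of_ne (lam.parts_pos hp) fun h => hmin (h ▸ hp)
  have hsum := Multiset.card_nsmul_le_sum htwo
  have hparts := eq_replicate_of_sum_le_card_nsmul htwo
  rw [lam.parts_sum, smul_eq_mul] at hsum hparts
  have hcard : lam.parts.card = n := by omega
  exact ⟨by omega, by rw [hparts (by omega), hcard]⟩
end
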